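/- Assume in addition that 𝒞(0) > 0. Then there exist a real number α > 0, a real number γ > 0, and a nonempty open set Γ ⊆ ℝ^d (namely Γ = {x : |x| < 1/b} and γ = α𝒞̄/(2e𝒞(0))) such that the weighted density g(x) = α f(x) satisfies: (i) ∫_{ℝ^d} ∫_{ℝ^d} g(x) g(y) 𝒞(x − y) dx dy = 𝒞(0), and (ii) for every x ∈ Γ, ∫_{ℝ^d} g(y) 𝒞(x − y) dy ≥ 𝒞(0) · γ. In other words, the finite measure μ(dx) = α f(x) dx fulfills condition (4) of the paper: ∫∫ 𝒞(x−y) μ(dx) μ(dy) = 𝒞(0) and μ ∗ 𝒞 ≥ 𝒞(0) γ χ_Γ. -/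

import Mathlib

open MeasureTheory Real

open ContinuousLinearMap (mul)
open Function (support)
open scoped Convolution

/-!
The profile `f x = exp (-b ‖x‖)` varies slowly: moving by `z` changes its logarithm by at most
`b ‖z‖`. On the support of `𝒞` this makes `f ⋆ 𝒞` differ from `f · ∫ 𝒞` by at most
`f · (exp (b R) - 1) ‖𝒞‖₁`, and the smallness of `b` turns this into `f ⋆ 𝒞 ≥ f · (∫ 𝒞) / 2`. So
the energy of `f` is positive and can be normalised by scaling, while on `‖x‖ < 1 / b` the profile
is at least `1 / e`.
-/

section Exponential

theorem abs_exp_sub_one_le_exp_abs_sub_one (s : ℝ) : |exp s - 1| ≤ exp |s| - 1 := by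
  rw [abs_sub_le_iff]
  refine ⟨by gcongr; exact le_abs_self s, ?_⟩
  linarith [add_one_le_exp s, add_one_le_exp |s|, neg_abs_le s]

theorem exp_sub_one_le_mul_exp (t : ℝ) : exp t - 1 ≤ t * exp t := by
  have h := mul_le_mul_of_nonneg_right (one_sub_le_exp_neg t) (exp_pos t).le
  rw [← exp_add, neg_add_cancel, exp_zero] at h
  linarith

theorem two_mul_exp_mul_sub_one_mul_le {b R K L : ℝ} (hb : 0 ≤ b) (hR : 0 ≤ R) (hK : 0 < K)
    (hKL : K ≤ L) (hbK : b ≤ K / (2 * exp 1 * R * L)) : 2 * (exp (b * R) - 1) * L ≤ K := by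
  have hL : 0 < L := hK.trans_le hKL
  have hsmall : 2 * (b * R * exp 1) * L ≤ K := by
    linarith [mul_le_of_le_div₀ hK.le (by positivity) hbK]
  have hbR : b * R ≤ 1 := by
    refine le_of_mul_le_mul_right ?_ hL
    calc b * R * L ≤ 2 * (b * R * exp 1) * L := by
          refine mul_le_mul_of_nonneg_right ?_ hL.le
          nlinarith [add_one_le_exp (1 : ℝ), mul_nonneg hb hR]
      _ ≤ 1 * L := by rw [one_mul]; exact hsmall.trans hKL
  have hexp : exp (b * R) - 1 ≤ b * R * exp 1 :=
    (exp_sub_one_le_mul_exp _).trans (by gcongr)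
  calc 2 * (exp (b * R) - 1) * L ≤ 2 * (b * R * exp 1) * L := by gcongr
    _ ≤ K := hsmall

theorem abs_exp_neg_mul_norm_sub_sub_le {E : Type*} [SeminormedAddCommGroup E] {b : ℝ}
    (hb : 0 ≤ b) (x z : E) :
    |exp (-b * ‖x - z‖) - exp (-b * ‖x‖)| ≤ exp (-b * ‖x‖) * (exp (b * ‖z‖) - 1) := by
  have hlog : |b * (‖x‖ - ‖x - z‖)| ≤ b * ‖z‖ := by
    rw [abs_mul, abs_of_nonneg hb]
    gcongr
    simpa using abs_norm_sub_norm_le x (x - z)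
  calc |exp (-b * ‖x - z‖) - exp (-b * ‖x‖)|
      = |exp (-b * ‖x‖) * (exp (b * (‖x‖ - ‖x - z‖)) - 1)| := by
        rw [mul_sub_one, ← exp_add]; ring_nf
    _ = exp (-b * ‖x‖) * |exp (b * (‖x‖ - ‖x - z‖)) - 1| := by rw [abs_mul, abs_exp]
    _ ≤ exp (-b * ‖x‖) * (exp |b * (‖x‖ - ‖x - z‖)| - 1) := by
        gcongr; exact abs_exp_sub_one_le_exp_abs_sub_one _
    _ ≤ exp (-b * ‖x‖) * (exp (b * ‖z‖) - 1) := by gcongr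

theorem exp_neg_mul_norm_le_one {E : Type*} [SeminormedAddCommGroup E] {b : ℝ}
    (hb : 0 ≤ b) (x : E) : exp (-b * ‖x‖) ≤ 1 := by
  rw [exp_le_one_iff, neg_mul, neg_nonpos]
  positivity

theorem integrable_exp_neg_mul_norm {E : Type*} [NormedAddCommGroup E] [NormedSpace ℝ E]
    [FiniteDimensional ℝ E] [MeasurableSpace E] [BorelSpace E] (μ : Measure E)
    [μ.IsAddHaarMeasure] {b : ℝ} (hb : 0 < b) : Integrable (fun x => exp (-b * ‖x‖)) μ := by
  cases subsingleton_or_nontrivial E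
  · exact (by fun_prop : Continuous fun x : E => exp (-b * ‖x‖)).integrable_of_hasCompactSupport
      (.of_compactSpace _)
  · rw [integrable_fun_norm_addHaar μ (f := fun r => exp (-b * r))]
    have hdim : (-1 : ℝ) < (Module.finrank ℝ E - 1 : ℕ) := by
      linarith [(Module.finrank ℝ E - 1).cast_nonneg (α := ℝ)]
    simpa using integrableOn_rpow_mul_exp_neg_mul_rpow hdim one_pos hb

end Exponential

section Convolution

theorem integrable_of_continuous_of_support_subset_norm_le {E F : Type*}
    [SeminormedAddCommGroup E] [ProperSpace E] [MeasurableSpace E] [OpensMeasurableSpace E]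
    [NormedAddCommGroup F] {μ : Measure E} [IsFiniteMeasureOnCompacts μ] {k : E → F} {R : ℝ}
    (hk : Continuous k) (hkR : support k ⊆ {x | ‖x‖ ≤ R}) : Integrable k μ :=
  hk.integrable_of_hasCompactSupport <| .of_support_subset_isCompact (isCompact_closedBall 0 R) <|
    hkR.trans fun _ hx => mem_closedBall_zero_iff.2 hx

variable {G : Type*} [AddCommGroup G] [MeasurableSpace G] [MeasurableAdd G] [MeasurableNeg G]
  {μ : Measure G} [μ.IsAddLeftInvariant] [μ.IsNegInvariant] {f k : G → ℝ}

theorem abs_convolution_sub_mul_integral_le (hf : AEStronglyMeasurable f μ)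
    (hk : Integrable k μ) {x : G} {ε : ℝ} (hε : ∀ z ∈ support k, |f (x - z) - f x| ≤ ε) :
    |(f ⋆[mul ℝ ℝ, μ] k) x - f x * ∫ z, k z ∂μ| ≤ ε * ∫ z, |k z| ∂μ := by
  have hbound (z : G) : ‖(f (x - z) - f x) * k z‖ ≤ ε * |k z| := by
    rw [norm_mul, norm_eq_abs, norm_eq_abs]
    obtain hz | hz := eq_or_ne (k z) 0
    · simp [hz]
    · gcongr; exact hε z hz
  have hdiff : Integrable (fun z => (f (x - z) - f x) * k z) μ := by
    refine (hk.abs.const_mul ε).mono' ?_ (.of_forall hbound)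
    exact ((hf.comp_quasiMeasurePreserving
      (Measure.measurePreserving_sub_left μ x).quasiMeasurePreserving).sub
      aestronglyMeasurable_const).mul hk.1
  have hsplit : (f ⋆[mul ℝ ℝ, μ] k) x =
      (∫ z, (f (x - z) - f x) * k z ∂μ) + f x * ∫ z, k z ∂μ := by
    rw [convolution_mul_swap, ← integral_const_mul, ← integral_add hdiff (hk.const_mul _)]
    simp only [sub_mul, sub_add_cancel]
  rw [hsplit, add_sub_cancel_right, ← integral_const_mul]
  exact norm_integral_le_of_norm_le (hk.abs.const_mul ε) (.of_forall hbound)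

end Convolution

section Energy

/-- The energy `∫∫ g(x) g(y) k(x - y) dx dy` of the density `g` for the covariance kernel `k`:
the quantity that the first half of condition (4) prescribes for the measure `g dμ`. -/
noncomputable def covarianceEnergy {G : Type*} [Sub G] [MeasurableSpace G] (μ : Measure G)
    (k g : G → ℝ) : ℝ :=
  ∫ x, ∫ y, g x * g y * k (x - y) ∂μ ∂μ

theorem covarianceEnergy_eq_integral_mul_convolution {G : Type*} [Sub G]
    [MeasurableSpace G] (μ : Measure G) (k g : G → ℝ) :
    covarianceEnergy μ k g = ∫ x, g x * (g ⋆[mul ℝ ℝ, μ] k) x ∂μ := by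
  simp only [covarianceEnergy, convolution_mul, mul_assoc, integral_const_mul]

theorem covarianceEnergy_const_mul {G : Type*} [Sub G] [MeasurableSpace G] (μ : Measure G)
    (k g : G → ℝ) (α : ℝ) :
    covarianceEnergy μ k (fun x => α * g x) = α ^ 2 * covarianceEnergy μ k g := by
  simp only [covarianceEnergy, ← integral_const_mul]
  congr! 4
  ring

theorem exists_covarianceEnergy_const_mul_eq {G : Type*} [Sub G] [MeasurableSpace G]
    {μ : Measure G} {k g : G → ℝ} (hg : 0 < covarianceEnergy μ k g) {c : ℝ} (hc : 0 < c) :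
    ∃ α > 0, covarianceEnergy μ k (fun x => α * g x) = c := by
  refine ⟨√(c / covarianceEnergy μ k g), by positivity, ?_⟩
  rw [covarianceEnergy_const_mul, sq_sqrt (by positivity), div_mul_cancel₀ _ hg.ne']

theorem covarianceEnergy_pos {G : Type*} [AddGroup G] [MeasurableSpace G] [MeasurableAdd₂ G]
    [MeasurableNeg G] {μ : Measure G} [SFinite μ] [μ.IsAddRightInvariant] [NeZero μ]
    {k g : G → ℝ} (hg : Integrable g μ) {M : ℝ} (hgM : ∀ x, ‖g x‖ ≤ M) (hk : Integrable k μ)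
    (hg_pos : ∀ x, 0 < g x) (hgk_pos : ∀ x, 0 < (g ⋆[mul ℝ ℝ, μ] k) x) :
    0 < covarianceEnergy μ k g := by
  have hpos (x : G) : 0 < g x * (g ⋆[mul ℝ ℝ, μ] k) x := mul_pos (hg_pos x) (hgk_pos x)
  have hint : Integrable (fun x => g x * (g ⋆[mul ℝ ℝ, μ] k) x) μ :=
    (hg.integrable_convolution (mul ℝ ℝ) hk).bdd_mul hg.1 (.of_forall hgM)
  rw [covarianceEnergy_eq_integral_mul_convolution,
    integral_pos_iff_support_of_nonneg (fun x => (hpos x).le) hint,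
    Set.eq_univ_of_forall (s := support _) fun x => (hpos x).ne']
  exact NeZero.pos (μ Set.univ)

end Energy

section ExponentialProfile

variable {E : Type*} [SeminormedAddCommGroup E] [MeasurableSpace E] [BorelSpace E]
  {μ : Measure E} [μ.IsAddLeftInvariant] [μ.IsNegInvariant] {k : E → ℝ} {R b : ℝ}

theorem exp_neg_mul_norm_mul_le_convolution (hk : Integrable k μ)
    (hkR : support k ⊆ {x | ‖x‖ ≤ R}) (hb : 0 ≤ b)
    (hbR : 2 * (exp (b * R) - 1) * ∫ x, |k x| ∂μ ≤ ∫ x, k x ∂μ) (x : E) :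
    exp (-b * ‖x‖) * ((∫ z, k z ∂μ) / 2) ≤
      ((fun y => exp (-b * ‖y‖)) ⋆[mul ℝ ℝ, μ] k) x := by
  have hclose : ∀ z ∈ support k, |exp (-b * ‖x - z‖) - exp (-b * ‖x‖)| ≤
      exp (-b * ‖x‖) * (exp (b * R) - 1) := fun z hz =>
    (abs_exp_neg_mul_norm_sub_sub_le hb x z).trans (by gcongr; exact hkR hz)
  have hconv := abs_convolution_sub_mul_integral_le
    (by fun_prop : Continuous fun y : E => exp (-b * ‖y‖)).aestronglyMeasurable hk hclose
  have hsmall := mul_le_mul_of_nonneg_left hbR (exp_pos (-b * ‖x‖)).le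
  linarith [neg_le_of_abs_le hconv]

theorem integral_div_two_mul_exp_one_le_convolution (hk : Integrable k μ)
    (hkR : support k ⊆ {x | ‖x‖ ≤ R}) (hk_nonneg : 0 ≤ ∫ x, k x ∂μ) (hb : 0 < b)
    (hbR : 2 * (exp (b * R) - 1) * ∫ x, |k x| ∂μ ≤ ∫ x, k x ∂μ) {x : E} (hx : ‖x‖ ≤ 1 / b) :
    (∫ z, k z ∂μ) / (2 * exp 1) ≤ ((fun y => exp (-b * ‖y‖)) ⋆[mul ℝ ℝ, μ] k) x := by
  have hbx : -1 ≤ -b * ‖x‖ := by linarith [(le_div_iff₀' hb).1 hx]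
  calc (∫ z, k z ∂μ) / (2 * exp 1) = exp (-1) * ((∫ z, k z ∂μ) / 2) := by
        rw [exp_neg]; field_simp
    _ ≤ exp (-b * ‖x‖) * ((∫ z, k z ∂μ) / 2) := by gcongr
    _ ≤ ((fun y => exp (-b * ‖y‖)) ⋆[mul ℝ ℝ, μ] k) x :=
        exp_neg_mul_norm_mul_le_convolution hk hkR hb.le hbR x

theorem covarianceEnergy_exp_neg_mul_norm_pos {E : Type*} [NormedAddCommGroup E]
    [NormedSpace ℝ E] [FiniteDimensional ℝ E] [MeasurableSpace E] [BorelSpace E] {μ : Measure E}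
    [μ.IsAddHaarMeasure] {k : E → ℝ} {R b : ℝ} (hk : Integrable k μ)
    (hkR : support k ⊆ {x | ‖x‖ ≤ R}) (hk_pos : 0 < ∫ x, k x ∂μ) (hb : 0 < b)
    (hbR : 2 * (exp (b * R) - 1) * ∫ x, |k x| ∂μ ≤ ∫ x, k x ∂μ) :
    0 < covarianceEnergy μ k (fun x => exp (-b * ‖x‖)) :=
  covarianceEnergy_pos (integrable_exp_neg_mul_norm μ hb)
    (fun x => (abs_of_pos (exp_pos _)).trans_le (exp_neg_mul_norm_le_one hb.le x)) hk
    (fun _ => exp_pos _)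
    (fun x => (by positivity : 0 < exp (-b * ‖x‖) * ((∫ z, k z ∂μ) / 2)).trans_le
      (exp_neg_mul_norm_mul_le_convolution hk hkR hb.le hbR x))

end ExponentialProfile

theorem condition_four_holds_general {E : Type*} [NormedAddCommGroup E] [NormedSpace ℝ E]
    [FiniteDimensional ℝ E] [MeasurableSpace E] [BorelSpace E] (μ : Measure E)
    [μ.IsAddHaarMeasure] {R : ℝ} {𝒞 : E → ℝ} (h𝒞int : Integrable 𝒞 μ)
    (h𝒞supp : support 𝒞 ⊆ {x | ‖x‖ ≤ R}) (h𝒞bar : 0 < ∫ x, 𝒞 x ∂μ) (h𝒞zero : 0 < 𝒞 0)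
    {b : ℝ} (hb : 0 < b) (hbR : 2 * (exp (b * R) - 1) * ∫ x, |𝒞 x| ∂μ ≤ ∫ x, 𝒞 x ∂μ)
    {f : E → ℝ} (hf : ∀ x, f x = exp (-b * ‖x‖)) :
    ∃ α : ℝ, 0 < α ∧
      ∃ γ : ℝ, 0 < γ ∧ γ = α * (∫ z, 𝒞 z ∂μ) / (2 * exp 1 * 𝒞 0) ∧
        ∃ Γ : Set E, Γ = {x | ‖x‖ < 1 / b} ∧ IsOpen Γ ∧ Γ.Nonempty ∧
          (∫ x, ∫ y, (α * f x) * (α * f y) * 𝒞 (x - y) ∂μ ∂μ) = 𝒞 0 ∧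
          ∀ x ∈ Γ, 𝒞 0 * γ ≤ ∫ y, (α * f y) * 𝒞 (x - y) ∂μ := by
  obtain rfl : f = fun x => exp (-b * ‖x‖) := funext hf
  obtain ⟨α, hα, henergy⟩ := exists_covarianceEnergy_const_mul_eq
    (covarianceEnergy_exp_neg_mul_norm_pos h𝒞int h𝒞supp h𝒞bar hb hbR) h𝒞zero
  refine ⟨α, hα, _, by positivity, rfl, _, rfl, isOpen_lt continuous_norm continuous_const,
    ⟨0, by simpa using hb⟩, henergy, fun x hx => ?_⟩
  calc 𝒞 0 * (α * (∫ z, 𝒞 z ∂μ) / (2 * exp 1 * 𝒞 0))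
      = α * ((∫ z, 𝒞 z ∂μ) / (2 * exp 1)) := by field_simp
    _ ≤ α * ∫ y, exp (-b * ‖y‖) * 𝒞 (x - y) ∂μ := by
        gcongr
        exact integral_div_two_mul_exp_one_le_convolution h𝒞int h𝒞supp h𝒞bar.le hb hbR (le_of_lt hx)
    _ = ∫ y, α * exp (-b * ‖y‖) * 𝒞 (x - y) ∂μ := by
        simp only [mul_assoc, integral_const_mul]

/-- Condition (4) of the paper holds for the measure `μ(dx) = α f(x) dx`:
there exist `α > 0`, `γ > 0` and a nonempty open set `Γ ⊆ ℝ^d`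
(namely `Γ = {x : ‖x‖ < 1/b}` and `γ = α𝒞̄/(2e𝒞(0))`) such that the weighted
density `g = α f` satisfies `∫∫ g(x) g(y) 𝒞(x−y) dx dy = 𝒞(0)` and
`∫ g(y) 𝒞(x−y) dy ≥ 𝒞(0) γ` for all `x ∈ Γ`. -/
theorem condition_four_holds
    (d : ℕ) (hd : 1 ≤ d) (R : ℝ) (hR : 0 < R)
    (𝒞 : (Fin d → ℝ) → ℝ) (h𝒞cont : Continuous 𝒞)
    (h𝒞supp : Function.support 𝒞 ⊆ {x | ‖x‖ ≤ R})
    (h𝒞bar : 0 < ∫ x, 𝒞 x) (h𝒞zero : 0 < 𝒞 0)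
    (b : ℝ) (hb : 0 < b)
    (hb' : b ≤ (∫ x, 𝒞 x) / (2 * Real.exp 1 * R * ∫ x, |𝒞 x|))
    (f : (Fin d → ℝ) → ℝ) (hf : ∀ x, f x = Real.exp (-b * ‖x‖)) :
    ∃ α : ℝ, 0 < α ∧
      ∃ γ : ℝ, 0 < γ ∧ γ = α * (∫ z, 𝒞 z) / (2 * Real.exp 1 * 𝒞 0) ∧
        ∃ Γ : Set (Fin d → ℝ), Γ = {x | ‖x‖ < 1 / b} ∧ IsOpen Γ ∧ Γ.Nonempty ∧
          (∫ x, ∫ y, (α * f x) * (α * f y) * 𝒞 (x - y)) = 𝒞 0 ∧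
          ∀ x ∈ Γ, 𝒞 0 * γ ≤ ∫ y, (α * f y) * 𝒞 (x - y) := by
  have h𝒞int : Integrable 𝒞 :=
    integrable_of_continuous_of_support_subset_norm_le h𝒞cont h𝒞supp
  exact condition_four_holds_general volume h𝒞int h𝒞supp h𝒞bar h𝒞zero hb
    (two_mul_exp_mul_sub_one_mul_le hb.le hR.le h𝒞bar
      (integral_mono h𝒞int h𝒞int.abs fun _ => le_abs_self _) hb') hf
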